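/- Let n ≥ 2, α ∈ [0,N) and γ > 1 be such that αγ < N, let Q ⊆ ℝ^{n+1} be a parabolic cylinder, and let q ∈ (0,∞). Then there exists a constant c depending only on α, γ, n and q such that for every measurable function g with ‖g‖_{L(γ,q)(Q)} < ∞, ‖M*_{α,Q}(g)‖_{L(Nγ/(N−αγ), q)(Q)} ≤ c ‖g‖_{L(γ,q)(Q)}. -/

import Mathlib

open MeasureTheory Set ENNReal

/-- The (backward) parabolic cylinder `Q_R(x₀,t₀) = B(x₀,R) × (t₀ - R², t₀) ⊆ ℝⁿ × ℝ`. -/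
def parabolicCylinder (n : ℕ) (x₀ : EuclideanSpace ℝ (Fin n)) (t₀ R : ℝ) :
    Set (EuclideanSpace ℝ (Fin n) × ℝ) :=
  (Metric.ball x₀ R) ×ˢ (Set.Ioo (t₀ - R ^ 2) t₀)

/-- `Q` is a parabolic cylinder. -/
def IsParabolicCylinder (n : ℕ) (Q : Set (EuclideanSpace ℝ (Fin n) × ℝ)) : Prop :=
  ∃ (x₀ : EuclideanSpace ℝ (Fin n)) (t₀ R : ℝ), 0 < R ∧ Q = parabolicCylinder n x₀ t₀ R

/-- The restricted fractional maximal operator of order `α ∈ [0, N]`, `N = n + 2`, relative to a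
parabolic cylinder `Q₀`:
`M*_{α,Q₀}(g)(p) = sup { |Q|^{α/N} ⨍_Q |g| : Q ⊆ Q₀ a parabolic cylinder with p ∈ Q }`. -/
noncomputable def parMaximal (n : ℕ) (α : ℝ) (Q₀ : Set (EuclideanSpace ℝ (Fin n) × ℝ))
    (g : EuclideanSpace ℝ (Fin n) × ℝ → ℝ) (p : EuclideanSpace ℝ (Fin n) × ℝ) : ℝ≥0∞ :=
  ⨆ (Q : Set (EuclideanSpace ℝ (Fin n) × ℝ)) (_ : IsParabolicCylinder n Q) (_ : Q ⊆ Q₀)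
    (_ : p ∈ Q),
      volume Q ^ (α / ((n : ℝ) + 2)) * ((volume Q)⁻¹ * ∫⁻ q in Q, ENNReal.ofReal |g q|)

/-- The Lorentz quasinorm `‖F‖_{L(γ,q)(E)}` of an `ℝ≥0∞`-valued function `F` on `E`:
`( q ∫₀^∞ ( λ^γ |{p ∈ E : F p > λ}| )^{q/γ} dλ/λ )^{1/q}`. -/
noncomputable def lorentzNormE {n : ℕ} (E : Set (EuclideanSpace ℝ (Fin n) × ℝ))
    (F : EuclideanSpace ℝ (Fin n) × ℝ → ℝ≥0∞) (γ q : ℝ) : ℝ≥0∞ :=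
  (ENNReal.ofReal q * ∫⁻ l in Set.Ioi (0 : ℝ),
      (ENNReal.ofReal (l ^ γ) * volume {p ∈ E | ENNReal.ofReal l < F p}) ^ (q / γ) *
        ENNReal.ofReal l⁻¹) ^ (1 / q)


/-! ### Analytic part: dyadic sums -/

lemma aux_geom {c : ℝ} (hc : 0 < c) : ∑' m : ℕ, (2 : ℝ≥0∞) ^ (-(c * (m : ℝ))) ≠ ⊤ := by
  have h : ∀ m : ℕ, (2 : ℝ≥0∞) ^ (-(c * (m : ℝ))) = ((2 : ℝ≥0∞) ^ (-c)) ^ m := by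
    intro m
    rw [← ENNReal.rpow_natCast, ← ENNReal.rpow_mul]
    congr 1; ring
  simp_rw [h]
  rw [ENNReal.tsum_geometric]
  have : (2 : ℝ≥0∞) ^ (-c) < 1 :=
    ENNReal.rpow_lt_one_of_one_lt_of_neg (by norm_num) (by linarith)
  simpa [tsub_eq_zero_iff_le] using this

lemma aux_P_add (x y : ℝ) : (2 : ℝ≥0∞) ^ (x + y) = 2 ^ x * 2 ^ y :=
  ENNReal.rpow_add x y (by norm_num) (by norm_num)

lemma aux_P_top (x : ℝ) : (2 : ℝ≥0∞) ^ x ≠ ⊤ :=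
  by simp [ENNReal.rpow_eq_top_iff]

lemma aux_P_zero (x : ℝ) : (2 : ℝ≥0∞) ^ x ≠ 0 := by
  simp [ENNReal.rpow_eq_zero_iff]

lemma aux_dyadic {x : ℝ≥0∞} (h0 : x ≠ 0) (ht : x ≠ ⊤) :
    ∃ k : ℤ, (2 : ℝ≥0∞) ^ (k : ℝ) < x ∧ x ≤ 2 ^ ((k : ℝ) + 1) := by
  obtain ⟨k, h1, h2⟩ := ENNReal.exists_mem_Ioc_zpow h0 ht (y := 2) (by norm_num) (by norm_num)
  refine ⟨k, by rwa [ENNReal.rpow_intCast], ?_⟩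
  have : ((k : ℝ) + 1) = ((k + 1 : ℤ) : ℝ) := by push_cast; rfl
  rwa [this, ENNReal.rpow_intCast]

lemma aux_mono {x y : ℝ} (h : x ≤ y) : (2 : ℝ≥0∞) ^ x ≤ 2 ^ y :=
  ENNReal.rpow_le_rpow_of_exponent_le (by norm_num) h

/-- power integral over an initial interval -/
lemma aux_int_pow {q r : ℝ} (hq : 0 < q) (hr : 0 ≤ r) :
    ENNReal.ofReal q * ∫⁻ l in Ioc 0 r, ENNReal.ofReal (l ^ (q - 1)) = ENNReal.ofReal r ^ q := by
  have hI : IntervalIntegrable (fun l : ℝ => l ^ (q - 1)) volume 0 r :=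
    intervalIntegral.intervalIntegrable_rpow' (by linarith)
  rw [← ofReal_integral_eq_lintegral_ofReal]
  · rw [← intervalIntegral.integral_of_le hr, integral_rpow (Or.inl (by linarith)),
      ← ENNReal.ofReal_mul hq.le, ENNReal.ofReal_rpow_of_nonneg hr hq.le]
    congr 1
    rw [sub_add_cancel, Real.zero_rpow hq.ne']
    field_simp
    ring
  · exact (intervalIntegrable_iff_integrableOn_Ioc_of_le hr).1 hI
  · filter_upwards [ae_restrict_mem measurableSet_Ioc] with l hl
    exact Real.rpow_nonneg hl.1.le _

lemma aux_int_le {q : ℝ} (hq : 0 < q) (H : ℝ≥0∞) :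
    ENNReal.ofReal q * ∫⁻ l in Ioi (0 : ℝ), {l : ℝ | ENNReal.ofReal l ≤ H}.indicator
      (fun l => ENNReal.ofReal (l ^ (q - 1))) l ≤ H ^ q := by
  rcases eq_or_ne H ⊤ with rfl | hH
  · simp [ENNReal.top_rpow_of_pos hq]
  · have h1 : ∫⁻ l in Ioi (0 : ℝ), {l : ℝ | ENNReal.ofReal l ≤ H}.indicator
      (fun l => ENNReal.ofReal (l ^ (q - 1))) l ≤
        ∫⁻ l in Ioc 0 H.toReal, ENNReal.ofReal (l ^ (q - 1)) := by
      rw [← lintegral_indicator measurableSet_Ioi, ← lintegral_indicator measurableSet_Ioc]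
      apply lintegral_mono
      intro l
      by_cases h : l ∈ Ioi (0 : ℝ)
      · by_cases h' : ENNReal.ofReal l ≤ H
        · have : l ∈ Ioc 0 H.toReal := ⟨h, (ENNReal.ofReal_le_iff_le_toReal hH).1 h'⟩
          simp [this, h, h']
        · rw [indicator_of_mem h, indicator_of_notMem (by exact h')]; exact zero_le
      · simp [h]
    calc _ ≤ _ := mul_le_mul_right h1 _
      _ = _ := by rw [aux_int_pow hq ENNReal.toReal_nonneg, ENNReal.ofReal_toReal hH]

lemma aux_le_int {q : ℝ} (hq : 0 < q) (S : Set ℝ) (hS : S ⊆ Ioi 0)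
    (hdown : ∀ r ∈ S, ∀ l, 0 < l → l ≤ r → l ∈ S) :
    volume S ^ q ≤ ENNReal.ofReal q * ∫⁻ l in S, ENNReal.ofReal (l ^ (q - 1)) := by
  set X := ENNReal.ofReal q * ∫⁻ l in S, ENNReal.ofReal (l ^ (q - 1)) with hX
  rw [← ENNReal.le_rpow_inv_iff hq]
  rcases eq_or_ne (X ^ q⁻¹) ⊤ with h | h
  · rw [h]; exact le_top
  have hsub : S ⊆ Ioc 0 (X ^ q⁻¹).toReal := by
    intro r hr
    refine ⟨hS hr, ?_⟩
    rw [← ENNReal.ofReal_le_iff_le_toReal h, ENNReal.le_rpow_inv_iff hq,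
      ← aux_int_pow hq (le_of_lt (hS hr))]
    apply mul_le_mul_right
    apply lintegral_mono_set
    intro l hl
    exact hdown r hr l hl.1 hl.2
  calc volume S ≤ _ := measure_mono hsub
    _ = _ := by rw [Real.volume_Ioc, sub_zero, ENNReal.ofReal_toReal h]

lemma aux_hardy {q ε : ℝ} (hq : 0 < q) (x : ℕ → ℝ≥0∞) :
    (∑' m, x m) ^ q ≤ (∑' m : ℕ, (2 : ℝ≥0∞) ^ (-(ε * (m : ℝ)))) ^ q *
      ∑' m : ℕ, 2 ^ (ε * (m : ℝ) * q) * x m ^ q := by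
  have h1 : ∑' m, x m ≤ (∑' m : ℕ, (2 : ℝ≥0∞) ^ (-(ε * (m : ℝ)))) *
      ⨆ m : ℕ, 2 ^ (ε * (m : ℝ)) * x m := by
    rw [← ENNReal.tsum_mul_right]
    apply ENNReal.tsum_le_tsum
    intro m
    calc x m = 2 ^ (-(ε * (m : ℝ))) * (2 ^ (ε * (m : ℝ)) * x m) := by
          rw [← mul_assoc, ← aux_P_add]; simp
      _ ≤ _ := by gcongr; exact le_iSup (fun m : ℕ => (2:ℝ≥0∞) ^ (ε * (m : ℝ)) * x m) m
  calc _ ≤ _ := ENNReal.rpow_le_rpow h1 hq.le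
    _ ≤ _ := by
      rw [ENNReal.mul_rpow_of_nonneg _ _ hq.le]
      apply mul_le_mul_right
      rw [← ENNReal.le_rpow_inv_iff hq]
      apply iSup_le
      intro m
      rw [ENNReal.le_rpow_inv_iff hq, ENNReal.mul_rpow_of_nonneg _ _ hq.le,
        ← ENNReal.rpow_mul]
      exact ENNReal.le_tsum (f := fun m : ℕ => (2:ℝ≥0∞) ^ (ε * (m : ℝ) * q) * x m ^ q) m

/-- The superlevel sets of the distribution function. -/
def auxS (d : ℝ → ℝ≥0∞) (j : ℤ) : Set ℝ := {l | 0 < l ∧ (2 : ℝ≥0∞) ^ (j : ℝ) < d l}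

lemma auxS_meas {d : ℝ → ℝ≥0∞} (hd : Antitone d) (j : ℤ) : MeasurableSet (auxS d j) :=
  measurableSet_Ioi.inter (measurableSet_lt measurable_const hd.measurable)

lemma aux_level_sum {d : ℝ → ℝ≥0∞} (hd : Antitone d) (hdt : ∀ l, d l ≠ ⊤) {q e : ℝ} (hq : 0 < q)
    (he : 0 < e) :
    ∑' j : ℤ, (2 : ℝ≥0∞) ^ ((j : ℝ) * e) * volume (auxS d j) ^ q ≤
      (∑' m : ℕ, (2 : ℝ≥0∞) ^ (-(e * (m : ℝ)))) * (ENNReal.ofReal q *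
        ∫⁻ l in Ioi (0 : ℝ), ENNReal.ofReal (l ^ (q - 1)) * d l ^ e) := by
  set G := ∑' m : ℕ, (2 : ℝ≥0∞) ^ (-(e * (m : ℝ))) with hG
  have hmeas : Measurable fun l : ℝ => ENNReal.ofReal (l ^ (q - 1)) := by fun_prop
  have step : ∀ j : ℤ, (2 : ℝ≥0∞) ^ ((j : ℝ) * e) * volume (auxS d j) ^ q ≤
      ENNReal.ofReal q * ∫⁻ l in Ioi (0 : ℝ), 2 ^ ((j : ℝ) * e) * (auxS d j).indicator
        (fun l => ENNReal.ofReal (l ^ (q - 1))) l := by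
    intro j
    rw [lintegral_const_mul _ (hmeas.indicator (auxS_meas hd j)),
      lintegral_indicator (auxS_meas hd j), Measure.restrict_restrict (auxS_meas hd j),
      inter_eq_left.2 (show auxS d j ⊆ Ioi 0 from fun l hl => hl.1), mul_left_comm]
    apply mul_le_mul_right
    apply aux_le_int hq _ (fun l hl => hl.1)
    intro r hr l hl hlr
    exact ⟨hl, hr.2.trans_le (hd hlr)⟩
  calc _ ≤ _ := ENNReal.tsum_le_tsum step
    _ = ENNReal.ofReal q * ∫⁻ l in Ioi (0 : ℝ), ∑' j : ℤ, 2 ^ ((j : ℝ) * e) *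
        (auxS d j).indicator (fun l => ENNReal.ofReal (l ^ (q - 1))) l := by
      rw [ENNReal.tsum_mul_left, lintegral_tsum]
      intro j
      exact ((hmeas.indicator (auxS_meas hd j)).const_mul _).aemeasurable
    _ ≤ ENNReal.ofReal q * ∫⁻ l in Ioi (0 : ℝ), G *
        (ENNReal.ofReal (l ^ (q - 1)) * d l ^ e) := by
      apply mul_le_mul_right
      apply lintegral_mono
      intro l
      dsimp only
      rcases eq_or_ne (d l) 0 with h0 | h0
      · have : ∀ j, l ∉ auxS d j := fun j hj => by simp [auxS, h0] at hj
        simp [this]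
      obtain ⟨i, hi1, hi2⟩ := aux_dyadic h0 (hdt l)
      have hinj : Function.Injective (fun m : ℕ => i - (m : ℤ)) := fun a b h => by
        simpa using h
      rw [← hinj.tsum_eq, hG, ← ENNReal.tsum_mul_right]
      · apply ENNReal.tsum_le_tsum
        intro m
        have e1 : (auxS d (i - (m:ℤ))).indicator (fun l => ENNReal.ofReal (l ^ (q - 1))) l ≤
            ENNReal.ofReal (l ^ (q - 1)) := indicator_le_self _ _ l
        have e2 : (2 : ℝ≥0∞) ^ (((i - (m:ℤ) : ℤ) : ℝ) * e) ≤ 2 ^ (-(e * (m:ℝ))) * d l ^ e := by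
          have : (((i - (m:ℤ) : ℤ) : ℝ) * e) = -(e * (m:ℝ)) + (i : ℝ) * e := by
            push_cast; ring
          rw [this, aux_P_add, ENNReal.rpow_mul]
          gcongr
        calc _ ≤ _ := mul_le_mul' e2 e1
          _ = _ := by ring
      · intro j hj
        have hj' : l ∈ auxS d j := by
          by_contra h
          simp [h] at hj
        have : (j : ℝ) < (i : ℝ) + 1 := by
          by_contra hc
          push Not at hc
          exact absurd (hj'.2.trans_le hi2) (not_lt.2 (aux_mono hc))
        have : j < i + 1 := by exact_mod_cast this
        exact ⟨(i - j).toNat, by dsimp only; omega⟩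
    _ = _ := by
      rw [lintegral_const_mul]
      · ring
      · exact hmeas.mul (hd.measurable.pow_const _)

theorem aux_analytic {q γ β : ℝ} (hq : 0 < q) (hγ : 1 < γ) (hs : β < 1 / γ) {K : ℝ≥0∞}
    (hK : K ≠ ⊤) : ∃ C : ℝ≥0∞, C ≠ ⊤ ∧ ∀ d D : ℝ → ℝ≥0∞, Antitone d → (∀ l, d l ≠ ⊤) →
      (∀ l, D l ≠ ⊤) →
      (∀ l, 0 < l → ∀ k : ℤ, (2 : ℝ≥0∞) ^ (k : ℝ) < D l → D l ≤ 2 ^ ((k : ℝ) + 1) →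
        ENNReal.ofReal l ≤ K * 2 ^ ((k : ℝ) * (β - 1)) *
          ∑' m : ℕ, 2 ^ ((k : ℝ) - m) * volume (auxS d (k - m))) →
      ENNReal.ofReal q * ∫⁻ l in Ioi (0 : ℝ), ENNReal.ofReal (l ^ (q - 1)) * D l ^ (q * (1 / γ - β))
        ≤ C * (ENNReal.ofReal q *
          ∫⁻ l in Ioi (0 : ℝ), ENNReal.ofReal (l ^ (q - 1)) * d l ^ (q / γ)) := by
  have hγ1 : 1 / γ < 1 := by rw [div_lt_one (by linarith)]; exact hγ
  have hγ0 : 0 < 1 / γ := by positivity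
  set s := 1 / γ - β with hs_def
  set ε := (1 - 1 / γ) / 2 with hε
  have hε0 : 0 < ε := by rw [hε]; linarith
  have hs0 : 0 < s := by linarith
  have hqγ : 0 < q / γ := div_pos hq (by linarith)
  set G := ∑' m : ℕ, (2 : ℝ≥0∞) ^ (-(ε * (m : ℝ))) with hG
  set G1 := ∑' m : ℕ, (2 : ℝ≥0∞) ^ (-(q * ε * (m : ℝ))) with hG1
  set G2 := ∑' m : ℕ, (2 : ℝ≥0∞) ^ (-(q / γ * (m : ℝ))) with hG2
  refine ⟨2 ^ (q * s) * K ^ q * G ^ q * G1 * G2, ?_, ?_⟩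
  · refine ENNReal.mul_ne_top (ENNReal.mul_ne_top (ENNReal.mul_ne_top (ENNReal.mul_ne_top
      (aux_P_top _) ?_) ?_) (aux_geom (by positivity))) (aux_geom hqγ)
    · exact ENNReal.rpow_ne_top_of_nonneg hq.le hK
    · exact ENNReal.rpow_ne_top_of_nonneg hq.le (aux_geom hε0)
  intro d D hd hdt hDt hmain
  set a : ℤ → ℝ≥0∞ := fun j => volume (auxS d j) with ha
  set H : ℤ → ℝ≥0∞ := fun k => K * 2 ^ ((k : ℝ) * (β - 1)) *
          ∑' m : ℕ, 2 ^ ((k : ℝ) - m) * a (k - m) with hH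
  have hmeas : Measurable fun l : ℝ => ENNReal.ofReal (l ^ (q - 1)) := by fun_prop
  have hmeasH : ∀ k, Measurable ({l : ℝ | ENNReal.ofReal l ≤ H k}.indicator
          (fun l => ENNReal.ofReal (l ^ (q - 1)))) := fun k =>
    hmeas.indicator (measurableSet_le (by fun_prop) measurable_const)
  -- bound on `H k ^ q`
  have hHq : ∀ k : ℤ, 2 ^ (((k:ℝ) + 1) * (q * s)) * H k ^ q ≤ 2 ^ (q * s) * K ^ q * G ^ q *
      ∑' m : ℕ, 2 ^ (-(q * ε * (m : ℝ))) *
        (2 ^ (((k - (m:ℤ) : ℤ) : ℝ) * (q / γ)) * a (k - m) ^ q) := by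
    intro k
    have h1 := aux_hardy (ε := ε) hq (fun m : ℕ => 2 ^ ((k : ℝ) - m) * a (k - m))
    have h2 : H k ^ q ≤ K ^ q * 2 ^ ((k : ℝ) * (β - 1) * q) * (G ^ q *
      ∑' m : ℕ, 2 ^ (ε * (m : ℝ) * q) * (2 ^ ((k : ℝ) - m) * a (k - m)) ^ q) := by
      simp only [hH]
      rw [ENNReal.mul_rpow_of_nonneg _ _ hq.le, ENNReal.mul_rpow_of_nonneg _ _ hq.le,
        ← ENNReal.rpow_mul]
      exact mul_le_mul_right h1 _
    calc _ ≤ _ := mul_le_mul_right h2 _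
      _ = K ^ q * G ^ q * (2 ^ (((k:ℝ) + 1) * (q * s)) * 2 ^ ((k : ℝ) * (β - 1) * q) *
        ∑' m : ℕ, 2 ^ (ε * (m : ℝ) * q) * (2 ^ ((k : ℝ) - m) * a (k - m)) ^ q) := by ring
      _ = K ^ q * G ^ q * (2 ^ (q * s) * ∑' m : ℕ, 2 ^ (-(q * ε * (m : ℝ))) *
        (2 ^ (((k - (m:ℤ) : ℤ) : ℝ) * (q / γ)) * a (k - m) ^ q)) := by
        congr 1
        rw [← ENNReal.tsum_mul_left, ← ENNReal.tsum_mul_left]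
        congr 1
        ext m
        rw [ENNReal.mul_rpow_of_nonneg _ _ hq.le, ← ENNReal.rpow_mul]
        simp only [← mul_assoc]
        simp only [← aux_P_add]
        congr 2
        rw [hs_def, hε]
        push_cast
        ring
      _ = _ := by ring
  have hpt : ∀ l ∈ Ioi (0:ℝ), ENNReal.ofReal (l ^ (q - 1)) * D l ^ (q * s) ≤
      ∑' k : ℤ, 2 ^ (((k:ℝ) + 1) * (q * s)) * {l : ℝ | ENNReal.ofReal l ≤ H k}.indicator
          (fun l => ENNReal.ofReal (l ^ (q - 1))) l := by
    intro l hl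
    rcases eq_or_ne (D l) 0 with h0 | h0
    · rw [h0, ENNReal.zero_rpow_of_pos (by positivity), mul_zero]; exact zero_le
    obtain ⟨k, hk1, hk2⟩ := aux_dyadic h0 (hDt l)
    have hk := hmain l hl k hk1 hk2
    refine le_trans ?_ (ENNReal.le_tsum k)
    rw [indicator_of_mem (by exact hk), mul_comm]
    apply mul_le_mul_left
    rw [ENNReal.rpow_mul 2]
    exact ENNReal.rpow_le_rpow hk2 (by positivity)
  calc _ ≤ ENNReal.ofReal q * ∫⁻ l in Ioi (0 : ℝ), ∑' k : ℤ, 2 ^ (((k:ℝ) + 1) * (q * s)) *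
          {l : ℝ | ENNReal.ofReal l ≤ H k}.indicator
          (fun l => ENNReal.ofReal (l ^ (q - 1))) l :=
        mul_le_mul_right (setLIntegral_mono' measurableSet_Ioi hpt) _
    _ = ∑' k : ℤ, 2 ^ (((k:ℝ) + 1) * (q * s)) * (ENNReal.ofReal q * ∫⁻ l in Ioi (0 : ℝ),
          {l : ℝ | ENNReal.ofReal l ≤ H k}.indicator
          (fun l => ENNReal.ofReal (l ^ (q - 1))) l) := by
        rw [lintegral_tsum (fun k => ((hmeasH k).const_mul _).aemeasurable),
          ← ENNReal.tsum_mul_left]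
        congr 1
        ext k
        rw [lintegral_const_mul _ (hmeasH k), mul_left_comm]
    _ ≤ ∑' k : ℤ, 2 ^ (((k:ℝ) + 1) * (q * s)) * H k ^ q :=
        ENNReal.tsum_le_tsum fun k => mul_le_mul_right (aux_int_le hq _) _
    _ ≤ _ := ENNReal.tsum_le_tsum hHq
    _ = 2 ^ (q * s) * K ^ q * G ^ q * (G1 * ∑' j : ℤ, 2 ^ ((j : ℝ) * (q / γ)) * a j ^ q) := by
        rw [ENNReal.tsum_mul_left, ENNReal.tsum_comm, hG1, ← ENNReal.tsum_mul_right]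
        congr 2
        ext m
        rw [ENNReal.tsum_mul_left]
        congr 1
        exact (Equiv.subRight (m : ℤ)).tsum_eq
          (fun j : ℤ => (2 : ℝ≥0∞) ^ ((j : ℝ) * (q / γ)) * a j ^ q)
    _ ≤ 2 ^ (q * s) * K ^ q * G ^ q * (G1 * (G2 * (ENNReal.ofReal q *
          ∫⁻ l in Ioi (0 : ℝ), ENNReal.ofReal (l ^ (q - 1)) * d l ^ (q / γ)))) := by
        gcongr
        exact aux_level_sum hd hdt hq hqγ
    _ = _ := by ring

/-! ### Geometric part: Vitali covering -/

lemma cyl_volume (n : ℕ) (x : EuclideanSpace ℝ (Fin n)) (t R : ℝ) (hR : 0 < R) :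
    volume (parabolicCylinder n x t R) =
      ENNReal.ofReal (R ^ (n + 2)) * volume (Metric.ball (0 : EuclideanSpace ℝ (Fin n)) 1) := by
  rw [parabolicCylinder, Measure.volume_eq_prod, Measure.prod_prod, Real.volume_Ioo,
    Measure.addHaar_ball_of_pos _ _ hR, finrank_euclideanSpace_fin, pow_add,
    ENNReal.ofReal_mul (by positivity)]
  have : t - (t - R ^ 2) = R ^ 2 := by ring
  rw [this]
  ring

lemma cyl_isOpen (n : ℕ) (x : EuclideanSpace ℝ (Fin n)) (t R : ℝ) :
    IsOpen (parabolicCylinder n x t R) :=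
  Metric.isOpen_ball.prod isOpen_Ioo

lemma cyl_nonempty (n : ℕ) (x : EuclideanSpace ℝ (Fin n)) (t R : ℝ) (hR : 0 < R) :
    (parabolicCylinder n x t R).Nonempty := by
  refine Set.Nonempty.prod ⟨x, Metric.mem_ball_self hR⟩ (nonempty_Ioo.2 ?_)
  nlinarith [sq_pos_of_pos hR]

lemma cyl_volume_pos (n : ℕ) (x : EuclideanSpace ℝ (Fin n)) (t R : ℝ) (hR : 0 < R) :
    volume (parabolicCylinder n x t R) ≠ 0 :=
  ((cyl_isOpen n x t R).measure_pos volume (cyl_nonempty n x t R hR)).ne'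

lemma cyl_volume_top (n : ℕ) (x : EuclideanSpace ℝ (Fin n)) (t R : ℝ) (hR : 0 < R) :
    volume (parabolicCylinder n x t R) ≠ ⊤ := by
  rw [cyl_volume n x t R hR]
  exact ENNReal.mul_ne_top ENNReal.ofReal_ne_top measure_ball_lt_top.ne

lemma cyl_radius_le (n : ℕ) (x x' : EuclideanSpace ℝ (Fin n)) (t t' R R' : ℝ) (hR : 0 < R)
    (hR' : 0 < R') (h : parabolicCylinder n x t R ⊆ parabolicCylinder n x' t' R') : R ≤ R' := by
  have h1 : Ioo (t - R ^ 2) t ⊆ Ioo (t' - R' ^ 2) t' := by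
    intro τ hτ
    have : (x, τ) ∈ parabolicCylinder n x t R := ⟨Metric.mem_ball_self hR, hτ⟩
    exact (h this).2
  have h2 := measure_mono (μ := volume) h1
  rw [Real.volume_Ioo, Real.volume_Ioo, ENNReal.ofReal_le_ofReal_iff (by nlinarith)] at h2
  nlinarith

lemma cyl_enlarge (n : ℕ) (x x' : EuclideanSpace ℝ (Fin n)) (t t' R R' : ℝ) (hR : 0 < R)
    (h : (parabolicCylinder n x t R ∩ parabolicCylinder n x' t' R').Nonempty)
    (hRR : R ≤ 2 * R') :
    parabolicCylinder n x t R ⊆ parabolicCylinder n x' (t' + 4 * R' ^ 2) (5 * R') := by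
  obtain ⟨⟨y, τ⟩, ⟨hy1, hτ1⟩, ⟨hy2, hτ2⟩⟩ := h
  rintro ⟨z, σ⟩ ⟨hz, hσ⟩
  simp only [Metric.mem_ball, mem_Ioo] at hy1 hτ1 hy2 hτ2 hz hσ
  have hsq : R ^ 2 ≤ 4 * R' ^ 2 := by nlinarith
  refine ⟨?_, ?_, ?_⟩
  · simp only [Metric.mem_ball]
    have := dist_triangle z x x'
    have := dist_triangle x y x'
    rw [dist_comm x y] at this
    linarith
  · simp only
    nlinarith [sq_nonneg R']
  · simp only
    linarith

lemma vitali_set (n : ℕ) {α : ℝ} (hα0 : 0 ≤ α) (hαN : α < (n : ℝ) + 2)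
    (Q : Set (EuclideanSpace ℝ (Fin n) × ℝ)) (hQ : IsParabolicCylinder n Q)
    (g : EuclideanSpace ℝ (Fin n) × ℝ → ℝ) (l : ℝ) :
    ∃ A ⊆ Q, MeasurableSet A ∧
      volume A ≤ volume {p ∈ Q | ENNReal.ofReal l < parMaximal n α Q g p} ∧
      volume {p ∈ Q | ENNReal.ofReal l < parMaximal n α Q g p} ≤
        ENNReal.ofReal (5 ^ (n + 2)) * volume A ∧
      ENNReal.ofReal l * volume A ^ (1 - α / ((n : ℝ) + 2)) ≤
        ∫⁻ p in A, ENNReal.ofReal |g p| := by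
  have hN : (0 : ℝ) < (n : ℝ) + 2 := by positivity
  set β := α / ((n : ℝ) + 2) with hβ
  have hβ0 : 0 ≤ β := by positivity
  have hβ1 : β < 1 := by rw [hβ, div_lt_one hN]; exact hαN
  obtain ⟨X, T, R₀, hR₀, rfl⟩ := hQ
  set Q := parabolicCylinder n X T R₀ with hQdef
  let B : (EuclideanSpace ℝ (Fin n)) × ℝ × ℝ → Set (EuclideanSpace ℝ (Fin n) × ℝ) :=
    fun i => parabolicCylinder n i.1 i.2.1 i.2.2
  let t : Set ((EuclideanSpace ℝ (Fin n)) × ℝ × ℝ) :=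
    {i | 0 < i.2.2 ∧ B i ⊆ Q ∧ ENNReal.ofReal l <
      volume (B i) ^ β * ((volume (B i))⁻¹ * ∫⁻ q in B i, ENNReal.ofReal |g q|)}
  obtain ⟨u, hut, hdisj, hcov⟩ := Vitali.exists_disjoint_subfamily_covering_enlargement B t
    (fun i => i.2.2) 2 (by norm_num) (fun i hi => hi.1.le) R₀
    (fun i hi => cyl_radius_le n _ _ _ _ _ _ hi.1 hR₀ hi.2.1)
    (fun i hi => cyl_nonempty n _ _ _ hi.1)
  have hcount : u.Countable := hdisj.countable_of_isOpen (fun i _ => cyl_isOpen n _ _ _)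
    (fun i hi => cyl_nonempty n _ _ _ (hut hi).1)
  have hmeasB : ∀ i, MeasurableSet (B i) := fun i => (cyl_isOpen n _ _ _).measurableSet
  have hAQ : (⋃ i ∈ u, B i) ⊆ Q := iUnion₂_subset fun i hi => (hut hi).2.1
  have hvolA : volume (⋃ i ∈ u, B i) = ∑' i : u, volume (B i) :=
    measure_biUnion hcount hdisj (fun i _ => hmeasB i)
  refine ⟨⋃ i ∈ u, B i, hAQ, MeasurableSet.biUnion hcount fun i _ => hmeasB i, ?_, ?_, ?_⟩
  · apply measure_mono
    intro p hp
    refine ⟨hAQ hp, ?_⟩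
    obtain ⟨i, hi, hpi⟩ := mem_iUnion₂.1 hp
    refine (hut hi).2.2.trans_le ?_
    exact le_iSup₂_of_le (B i) ⟨_, _, _, (hut hi).1, rfl⟩
      (le_iSup₂_of_le (hut hi).2.1 hpi le_rfl)
  · have hsub : {p ∈ Q | ENNReal.ofReal l < parMaximal n α Q g p} ⊆
        ⋃ i ∈ u, parabolicCylinder n i.1 (i.2.1 + 4 * i.2.2 ^ 2) (5 * i.2.2) := by
      rintro p ⟨hpQ, hp⟩
      simp only [parMaximal, lt_iSup_iff] at hp
      obtain ⟨Q', ⟨x, τ, R, hR, rfl⟩, hQ', hpQ', hlt⟩ := hp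
      obtain ⟨b, hb, hne, hle⟩ := hcov (x, τ, R) ⟨hR, hQ', hlt⟩
      exact mem_iUnion₂.2 ⟨b, hb, cyl_enlarge n _ _ _ _ _ _ hR hne hle hpQ'⟩
    refine (measure_mono hsub).trans ((measure_biUnion_le _ hcount _).trans ?_)
    rw [hvolA, ← ENNReal.tsum_mul_left]
    apply ENNReal.tsum_le_tsum
    intro i
    have hi := (hut i.2).1
    rw [cyl_volume n _ _ _ (by linarith), cyl_volume n _ _ _ hi, mul_pow,
      ENNReal.ofReal_mul (by positivity), mul_assoc]
  · rw [lintegral_biUnion hcount (fun i _ => hmeasB i) hdisj]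
    set A := ⋃ i ∈ u, B i with hA
    have hAtop : volume A ≠ ⊤ :=
      ne_top_of_le_ne_top (cyl_volume_top n X T R₀ hR₀) (measure_mono hAQ)
    rcases eq_or_ne (volume A) 0 with h0 | h0
    · rw [h0, ENNReal.zero_rpow_of_pos (by linarith), mul_zero]; exact zero_le
    rw [sub_eq_add_neg, ENNReal.rpow_add _ _ h0 hAtop, ENNReal.rpow_one]
    nth_rewrite 1 [hvolA]
    rw [← ENNReal.tsum_mul_right, ← ENNReal.tsum_mul_left]
    apply ENNReal.tsum_le_tsum
    intro i
    have hi := hut i.2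
    have hv0 : volume (B i) ≠ 0 := cyl_volume_pos n _ _ _ hi.1
    have hvt : volume (B i) ≠ ⊤ := cyl_volume_top n _ _ _ hi.1
    have hle : volume (B i) ≤ volume A := measure_mono (subset_biUnion_of_mem i.2)
    have e1 : volume A ^ (-β) ≤ volume (B i) ^ (-β) := by
      rw [ENNReal.rpow_neg, ENNReal.rpow_neg, ENNReal.inv_le_inv]
      exact ENNReal.rpow_le_rpow hle hβ0
    calc ENNReal.ofReal l * (volume (B i) * volume A ^ (-β))
        ≤ (volume (B i) ^ β * ((volume (B i))⁻¹ * ∫⁻ q in B i, ENNReal.ofReal |g q|)) *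
          (volume (B i) * volume (B i) ^ (-β)) := by
            gcongr
            exact hi.2.2.le
      _ = (volume (B i) ^ β * volume (B i) ^ (-β)) * ((volume (B i))⁻¹ * volume (B i)) *
          ∫⁻ q in B i, ENNReal.ofReal |g q| := by ring
      _ = _ := by
          rw [← ENNReal.rpow_add _ _ hv0 hvt, ENNReal.inv_mul_cancel hv0 hvt]
          simp

lemma integral_bound (n : ℕ) (Q A : Set (EuclideanSpace ℝ (Fin n) × ℝ)) (hAQ : A ⊆ Q)
    (hA : MeasurableSet A) (g : EuclideanSpace ℝ (Fin n) × ℝ → ℝ) (hg : Measurable g)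
    (d : ℝ → ℝ≥0∞)
    (hd : d = fun l => volume {p ∈ Q | ENNReal.ofReal l < ENNReal.ofReal |g p|})
    (hanti : Antitone d) (hdt : ∀ l, d l ≠ ⊤) (k : ℤ) (hk : volume A ≤ 2 ^ ((k : ℝ) + 1)) :
    ∫⁻ p in A, ENNReal.ofReal |g p| ≤
      2 * ∑' m : ℕ, 2 ^ ((k : ℝ) - m) * volume (auxS d (k - m)) := by
  have hsum : ∑' m : ℕ, (2 : ℝ≥0∞) ^ ((k : ℝ) - m) * volume (auxS d (k - m)) =
      ∫⁻ l in Ioi (0 : ℝ), ∑' m : ℕ, 2 ^ ((k : ℝ) - m) *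
        (auxS d (k - m)).indicator (fun _ => (1 : ℝ≥0∞)) l := by
    rw [lintegral_tsum]
    · congr 1
      ext m
      rw [lintegral_const_mul _ (measurable_const.indicator (auxS_meas hanti _)),
        lintegral_indicator (auxS_meas hanti _), Measure.restrict_restrict (auxS_meas hanti _),
        inter_eq_left.2 (show auxS d (k - m) ⊆ Ioi 0 from fun l hl => hl.1)]
      simp
    · intro m
      exact ((measurable_const.indicator (auxS_meas hanti _)).const_mul _).aemeasurable
  rw [hsum, lintegral_eq_lintegral_meas_lt _ (Filter.Eventually.of_forall fun p => abs_nonneg (g p))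
    hg.abs.aemeasurable, ← lintegral_const_mul' _ _ (by norm_num)]
  apply setLIntegral_mono' measurableSet_Ioi
  intro l hl
  have hl0 : 0 < l := hl
  have hmle : volume.restrict A {p | l < |g p|} ≤ d l := by
    rw [Measure.restrict_apply (measurableSet_lt measurable_const hg.abs), hd]
    apply measure_mono
    rintro p ⟨hp1, hp2⟩
    exact ⟨hAQ hp2, (ENNReal.ofReal_lt_ofReal_iff_of_nonneg hl0.le).2 hp1⟩
  have hmle2 : volume.restrict A {p | l < |g p|} ≤ 2 ^ ((k : ℝ) + 1) :=
    by
    rw [Measure.restrict_apply (measurableSet_lt measurable_const hg.abs)]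
    exact (measure_mono inter_subset_right).trans hk
  rcases eq_or_ne (d l) 0 with h0 | h0
  · rw [h0] at hmle
    exact hmle.trans zero_le
  obtain ⟨i, hi1, hi2⟩ := aux_dyadic h0 (hdt l)
  have key : ∀ m : ℕ, (2 : ℝ≥0∞) ^ (((k - m : ℤ) : ℝ)) < d l →
      volume.restrict A {p | l < |g p|} ≤ 2 ^ ((k : ℝ) - m + 1) →
      volume.restrict A {p | l < |g p|} ≤ 2 * ∑' m : ℕ, 2 ^ ((k : ℝ) - m) *
        (auxS d (k - m)).indicator (fun _ => (1 : ℝ≥0∞)) l := by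
    intro m h1 h2
    refine h2.trans ?_
    rw [aux_P_add, ENNReal.rpow_one, mul_comm]
    apply mul_le_mul_right
    refine le_trans ?_ (ENNReal.le_tsum m)
    rw [indicator_of_mem (show l ∈ auxS d (k - m) from ⟨hl0, h1⟩), mul_one]
  rcases le_or_gt i k with hik | hik
  · obtain ⟨m, hm⟩ := Int.le.dest hik
    have hi : i = k - m := by omega
    subst hi
    refine key m hi1 (hmle.trans (hi2.trans (le_of_eq ?_)))
    push_cast
    rfl
  · refine key 0 ?_ (by simpa using hmle2)
    refine lt_of_le_of_lt (aux_mono ?_) hi1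
    simp only [Nat.cast_zero, sub_zero]
    exact_mod_cast hik.le

lemma lorentz_integrand {l γ q : ℝ} (hl : 0 < l) (hγ : 0 < γ) (hq : 0 < q) (v : ℝ≥0∞) :
    (ENNReal.ofReal (l ^ γ) * v) ^ (q / γ) * ENNReal.ofReal l⁻¹ =
      ENNReal.ofReal (l ^ (q - 1)) * v ^ (q / γ) := by
  rw [ENNReal.mul_rpow_of_nonneg _ _ (by positivity), ENNReal.ofReal_rpow_of_pos (by positivity),
    mul_right_comm, ← ENNReal.ofReal_mul (by positivity), ← Real.rpow_mul hl.le,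
    mul_div_cancel₀ _ hγ.ne', Real.rpow_sub hl, Real.rpow_one, div_eq_mul_inv (l ^ q) l]

lemma lorentz_eq {n : ℕ} (E : Set (EuclideanSpace ℝ (Fin n) × ℝ))
    (F : EuclideanSpace ℝ (Fin n) × ℝ → ℝ≥0∞) {γ q : ℝ} (hγ : 0 < γ) (hq : 0 < q) :
    lorentzNormE E F γ q = (ENNReal.ofReal q * ∫⁻ l in Set.Ioi (0 : ℝ),
      ENNReal.ofReal (l ^ (q - 1)) * volume {p ∈ E | ENNReal.ofReal l < F p} ^ (q / γ)) ^ (1 / q) := by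
  rw [lorentzNormE]
  congr 2
  exact setLIntegral_congr_fun measurableSet_Ioi fun l hl => lorentz_integrand hl hγ hq _

/-- Lorentz space boundedness of the restricted fractional maximal operator:
for `α ∈ [0,N)`, `γ > 1` with `αγ < N` (`N = n + 2`) and `q ∈ (0,∞)` there exists
`c = c(α,γ,n,q)` such that on every parabolic cylinder `Q`,
`‖M*_{α,Q}(g)‖_{L(Nγ/(N-αγ),q)(Q)} ≤ c ‖g‖_{L(γ,q)(Q)}`. -/
theorem maximal_lorentz_bound (n : ℕ) (hn : 2 ≤ n) (α γ q : ℝ)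
    (hα0 : 0 ≤ α) (hαN : α < (n : ℝ) + 2) (hγ : 1 < γ) (hαγ : α * γ < (n : ℝ) + 2)
    (hq : 0 < q) :
    ∃ c : ℝ, 0 < c ∧
      ∀ Q : Set (EuclideanSpace ℝ (Fin n) × ℝ), IsParabolicCylinder n Q →
      ∀ g : EuclideanSpace ℝ (Fin n) × ℝ → ℝ, Measurable g →
        lorentzNormE Q (fun p => ENNReal.ofReal |g p|) γ q < ⊤ →
        lorentzNormE Q (parMaximal n α Q g)
            (((n : ℝ) + 2) * γ / (((n : ℝ) + 2) - α * γ)) q ≤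
          ENNReal.ofReal c * lorentzNormE Q (fun p => ENNReal.ofReal |g p|) γ q := by
  have hN : (0 : ℝ) < (n : ℝ) + 2 := by positivity
  have hγ0 : 0 < γ := by linarith
  set β := α / ((n : ℝ) + 2) with hβ
  have hβ1 : β < 1 := by rw [hβ, div_lt_one hN]; exact hαN
  have hs : β < 1 / γ := by
    rw [hβ, div_lt_div_iff₀ hN hγ0]; linarith
  set M := ENNReal.ofReal (5 ^ (n + 2)) with hM
  have hMt : M ^ (1 - β) ≠ ⊤ :=
    ENNReal.rpow_ne_top_of_nonneg (by linarith) ENNReal.ofReal_ne_top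
  obtain ⟨C, hC, hmain⟩ := aux_analytic (q := q) (γ := γ) (β := β) (K := 2 * M ^ (1 - β)) hq hγ hs
    (ENNReal.mul_ne_top (by norm_num) hMt)
  have hCq : C ^ (1 / q) ≠ ⊤ := ENNReal.rpow_ne_top_of_nonneg (by positivity) hC
  refine ⟨(C ^ (1 / q)).toReal + 1, by positivity, ?_⟩
  intro Q hQ g hg _
  have hden : 0 < ((n : ℝ) + 2) - α * γ := by linarith
  have hstar : 0 < ((n : ℝ) + 2) * γ / (((n : ℝ) + 2) - α * γ) := by positivity
  have hexp : q / (((n : ℝ) + 2) * γ / (((n : ℝ) + 2) - α * γ)) = q * (1 / γ - β) := by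
    rw [hβ]; field_simp
  have hQtop : volume Q ≠ ⊤ := by
    obtain ⟨X, T, R, hR, rfl⟩ := hQ
    exact cyl_volume_top n X T R hR
  rw [lorentz_eq _ _ hγ0 hq, lorentz_eq _ _ hstar hq, hexp]
  have hbound := hmain (fun l => volume {p ∈ Q | ENNReal.ofReal l < ENNReal.ofReal |g p|})
    (fun l => volume {p ∈ Q | ENNReal.ofReal l < parMaximal n α Q g p}) ?_ ?_ ?_ ?_
  · calc _ ≤ _ := ENNReal.rpow_le_rpow hbound (by positivity : 0 ≤ 1 / q)
      _ ≤ _ := by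
        rw [ENNReal.mul_rpow_of_nonneg _ _ (by positivity)]
        apply mul_le_mul_left
        rw [ENNReal.le_ofReal_iff_toReal_le hCq (by positivity)]
        linarith
  · intro a b hab
    apply measure_mono
    rintro p ⟨hp, hlt⟩
    exact ⟨hp, (ENNReal.ofReal_le_ofReal hab).trans_lt hlt⟩
  · exact fun l => ne_top_of_le_ne_top hQtop (measure_mono fun p hp => hp.1)
  · exact fun l => ne_top_of_le_ne_top hQtop (measure_mono fun p hp => hp.1)
  · intro l hl k hk1 hk2
    obtain ⟨A, hAQ, hA, hA1, hA2, hA3⟩ := vitali_set n hα0 hαN Q hQ g l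
    have hint := integral_bound n Q A hAQ hA g hg _ rfl
      (by
        intro a b hab
        apply measure_mono
        rintro p ⟨hp, hlt⟩
        exact ⟨hp, (ENNReal.ofReal_le_ofReal hab).trans_lt hlt⟩)
      (fun l => ne_top_of_le_ne_top hQtop (measure_mono fun p hp => hp.1)) k (hA1.trans hk2)
    have h1 : (2 : ℝ≥0∞) ^ ((k : ℝ) * (1 - β)) ≤ M ^ (1 - β) * volume A ^ (1 - β) := by
      rw [← ENNReal.mul_rpow_of_nonneg _ _ (by linarith), ENNReal.rpow_mul]
      exact ENNReal.rpow_le_rpow (hk1.le.trans hA2) (by linarith)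
    calc ENNReal.ofReal l
        = 2 ^ ((k : ℝ) * (β - 1)) * (ENNReal.ofReal l * 2 ^ ((k : ℝ) * (1 - β))) := by
          rw [mul_left_comm, ← aux_P_add]
          have : (k : ℝ) * (β - 1) + (k : ℝ) * (1 - β) = 0 := by ring
          rw [this]; simp
      _ ≤ 2 ^ ((k : ℝ) * (β - 1)) * (ENNReal.ofReal l * (M ^ (1 - β) * volume A ^ (1 - β))) := by
          gcongr
      _ = 2 ^ ((k : ℝ) * (β - 1)) * M ^ (1 - β) * (ENNReal.ofReal l * volume A ^ (1 - β)) := by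
          ring
      _ ≤ _ := mul_le_mul_right (hA3.trans hint) _
      _ = _ := by ring
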